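/- (Recursive formula for ∞-adic multiple zeta values.) Let r ≥ 1 and m_1,…,m_r ∈ ℤ_{≥0}. Then in A: ζ_∞(−m_1,…,−m_r) = Σ_{l=0}^{r} (−1)^l · ζ_{<d}(−m_{l+1},…,−m_r) · [ Σ_{(a_1,…,a_l)} v^{a_1+⋯+a_l} · ζ_{<d}(−(m_1−a_1)) ⋯ ζ_{<d}(−(m_l−a_l)) · C(m_1,a_1) ⋯ C(m_l,a_l) · ζ_∞(−a_1,…,−a_l) ], where the inner sum runs over all integer tuples (a_1,…,a_l) with 0 ≤ a_j < m_j and (q−1) | (m_j − a_j) for all 1 ≤ j ≤ l (an empty sum if some m_j = 0 for j ≤ l), and the l = 0 summand is ζ_{<d}(−m_1,…,−m_r). -/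

import Mathlib

open Polynomial

/-- The power sum `S_i(-m)`: the sum of `n ^ m` over monic polynomials `n` of degree `i`. -/
noncomputable def powerSum (F : Type*) [Field F] [Fintype F] (i m : ℕ) : Polynomial F :=
  ∑ᶠ n ∈ {n : Polynomial F | n.Monic ∧ n.natDegree = i}, n ^ m

/-- The restricted power sum `S̃_i(-m)`: the sum of `n ^ m` over monic polynomials `n` of
degree `i` not divisible by `v`. -/
noncomputable def powerSumV (F : Type*) [Field F] [Fintype F] (v : Polynomial F) (i m : ℕ) :
    Polynomial F :=
  ∑ᶠ n ∈ {n : Polynomial F | n.Monic ∧ n.natDegree = i ∧ ¬ v ∣ n}, n ^ m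

/-- `ζ_∞(-m_1, …, -m_r)`, the ∞-adic multiple zeta value at nonpositive integers:
the sum over `i_1 > ⋯ > i_r ≥ 0` of `S_{i_1}(-m_1) ⋯ S_{i_r}(-m_r)`.
Only `m 0, …, m (r-1)` are used.  The depth-0 value is `1`. -/
noncomputable def zetaInf (F : Type*) [Field F] [Fintype F] (r : ℕ) (m : ℕ → ℕ) :
    Polynomial F :=
  ∑ᶠ i ∈ {i : Fin r → ℕ | StrictAnti i}, ∏ j : Fin r, powerSum F (i j) (m (j : ℕ))

/-- `ζ⋆_∞(-m_1, …, -m_r)`, the ∞-adic multiple zeta star value at nonpositive integers: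
the sum over `i_1 ≥ ⋯ ≥ i_r ≥ 0` of `S_{i_1}(-m_1) ⋯ S_{i_r}(-m_r)`. -/
noncomputable def zetaInfStar (F : Type*) [Field F] [Fintype F] (r : ℕ) (m : ℕ → ℕ) :
    Polynomial F :=
  ∑ᶠ i ∈ {i : Fin r → ℕ | Antitone i}, ∏ j : Fin r, powerSum F (i j) (m (j : ℕ))

/-- `ζ_v(-m_1, …, -m_r)`, the v-adic multiple zeta value at nonpositive integers. -/
noncomputable def zetaV (F : Type*) [Field F] [Fintype F] (v : Polynomial F) (r : ℕ)
    (m : ℕ → ℕ) : Polynomial F :=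
  ∑ᶠ i ∈ {i : Fin r → ℕ | StrictAnti i}, ∏ j : Fin r, powerSumV F v (i j) (m (j : ℕ))

/-- `ζ⋆_v(-m_1, …, -m_r)`, the v-adic multiple zeta star value at nonpositive integers. -/
noncomputable def zetaVStar (F : Type*) [Field F] [Fintype F] (v : Polynomial F) (r : ℕ)
    (m : ℕ → ℕ) : Polynomial F :=
  ∑ᶠ i ∈ {i : Fin r → ℕ | Antitone i}, ∏ j : Fin r, powerSumV F v (i j) (m (j : ℕ))

/-- `ζ_{<d}(-m_1, …, -m_r)`, the truncated multiple zeta value: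
the sum over `d > i_1 > ⋯ > i_r ≥ 0` of `S_{i_1}(-m_1) ⋯ S_{i_r}(-m_r)`. -/
noncomputable def zetaLt (F : Type*) [Field F] [Fintype F] (d r : ℕ) (m : ℕ → ℕ) :
    Polynomial F :=
  ∑ᶠ i ∈ {i : Fin r → ℕ | StrictAnti i ∧ ∀ j, i j < d},
    ∏ j : Fin r, powerSum F (i j) (m (j : ℕ))

/-- `ζ⋆_{<d}(-m_1, …, -m_r)`, the truncated multiple zeta star value. -/
noncomputable def zetaLtStar (F : Type*) [Field F] [Fintype F] (d r : ℕ) (m : ℕ → ℕ) :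
    Polynomial F :=
  ∑ᶠ i ∈ {i : Fin r → ℕ | Antitone i ∧ ∀ j, i j < d},
    ∏ j : Fin r, powerSum F (i j) (m (j : ℕ))

/-- `ζ_{<d}(-m)`, the depth-one truncated zeta value `Σ_{d > i ≥ 0} S_i(-m)`. -/
noncomputable def zetaLtOne (F : Type*) [Field F] [Fintype F] (d m : ℕ) : Polynomial F :=
  ∑ᶠ i ∈ {i : ℕ | i < d}, powerSum F i m

open Finset

section NestedSum

variable {R : Type*} [CommRing R]

/-- The nested sum of `f 0 i_1 * ⋯ * f (r - 1) i_r` over `N > i_1 > ⋯ > i_r ≥ 0`. -/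
noncomputable def nestedSum (r : ℕ) (f : ℕ → ℕ → R) (N : ℕ) : R :=
  ∑ i ∈ (Fintype.piFinset fun _ : Fin r => range N) with StrictAnti i, ∏ j : Fin r, f j (i j)

@[simp]
lemma nestedSum_zero (f : ℕ → ℕ → R) (N : ℕ) : nestedSum 0 f N = 1 := by
  have h : ∀ i : Fin 0 → ℕ, StrictAnti i := fun i a => a.elim0
  simp [nestedSum, h]

lemma strictAnti_fin_cons {r : ℕ} (a : ℕ) (i : Fin r → ℕ) :
    StrictAnti (Fin.cons a i : Fin (r + 1) → ℕ) ↔ StrictAnti i ∧ ∀ j, i j < a := by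
  constructor
  · intro h
    refine ⟨fun x y hxy => ?_, fun j => ?_⟩
    · simpa using h (Fin.succ_lt_succ_iff.2 hxy)
    · simpa using h (Fin.succ_pos j)
  · rintro ⟨h, ha⟩ x y hxy
    induction y using Fin.cases with
    | zero => exact absurd hxy (Fin.not_lt_zero x)
    | succ y =>
      induction x using Fin.cases with
      | zero => simpa using ha y
      | succ x => simpa using h (Fin.succ_lt_succ_iff.1 hxy)

lemma nestedSum_succ (r : ℕ) (f : ℕ → ℕ → R) (N : ℕ) :
    nestedSum (r + 1) f N = ∑ a ∈ range N, f 0 a * nestedSum r (fun j => f (j + 1)) a := by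
  simp only [nestedSum, mul_sum]
  rw [sum_sigma']
  symm
  refine sum_bij' (fun x _ => (Fin.cons x.1 x.2 : Fin (r + 1) → ℕ))
    (fun i _ => ⟨i 0, Fin.tail i⟩) ?_ ?_ ?_ ?_ ?_
  · rintro ⟨a, i⟩ h
    simp only [mem_sigma, mem_filter, Fintype.mem_piFinset, mem_range] at h
    simp only [mem_filter, Fintype.mem_piFinset, mem_range, strictAnti_fin_cons]
    refine ⟨fun j => ?_, h.2.2, h.2.1⟩
    induction j using Fin.cases with
    | zero => simpa using h.1
    | succ j => simpa using (h.2.1 j).trans h.1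
  · intro i h
    rw [← Fin.cons_self_tail i] at h
    simp only [mem_filter, Fintype.mem_piFinset, mem_range, strictAnti_fin_cons] at h
    simp only [mem_sigma, mem_filter, Fintype.mem_piFinset, mem_range]
    exact ⟨by simpa using h.1 0, h.2.2, h.2.1⟩
  · rintro ⟨a, i⟩ h
    simp
  · intro i h
    simp
  · rintro ⟨a, i⟩ h
    simp [Fin.prod_univ_succ]

/-- Splitting a nested sum according to how many of the indices are at least `d`. -/
lemma nestedSum_add (r : ℕ) (f : ℕ → ℕ → R) (d N : ℕ) :
    nestedSum r f (d + N) = ∑ l ∈ range (r + 1),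
      nestedSum l (fun j i => f j (d + i)) N * nestedSum (r - l) (fun j => f (l + j)) d := by
  induction r generalizing f N with
  | zero => simp
  | succ r ih =>
    rw [sum_range_succ', nestedSum_succ, sum_range_add, ← nestedSum_succ, add_comm]
    congr 1
    · simp only [ih, mul_sum]
      rw [sum_comm]
      refine sum_congr rfl fun l _ => ?_
      rw [nestedSum_succ, sum_mul]
      refine sum_congr rfl fun i _ => ?_
      simp only [Nat.add_sub_add_right, mul_assoc, Nat.add_right_comm l 1]
    · simp

/-- Multilinearity of nested sums. -/
lemma nestedSum_sum (r : ℕ) (A : ℕ → Finset ℕ) (c : ℕ → ℕ → R) (g : ℕ → ℕ → R) (N : ℕ) :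
    nestedSum r (fun j i => ∑ a ∈ A j, c j a * g a i) N =
      ∑ a ∈ Fintype.piFinset (fun j : Fin r => A j),
        (∏ j : Fin r, c j (a j)) *
          ∑ i ∈ (Fintype.piFinset fun _ : Fin r => range N) with StrictAnti i,
            ∏ j : Fin r, g (a j) (i j) := by
  simp only [nestedSum, prod_univ_sum, mul_sum, ← prod_mul_distrib]
  rw [sum_comm]

end NestedSum

section PowerSum

variable (F : Type*) [Field F] [Fintype F]

lemma finite_degree_lt (d : ℕ) : {p : F[X] | p.degree < d}.Finite := by
  have : Finite (degreeLT F d) := Finite.of_equiv _ (degreeLTEquiv F d).toEquiv.symm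
  refine (Set.toFinite (degreeLT F d : Set F[X])).subset fun p hp => ?_
  exact mem_degreeLT.2 hp

/-- The polynomials of degree less than `d`, as a finset. -/
noncomputable def polysLT (d : ℕ) : Finset F[X] := (finite_degree_lt F d).toFinset

variable {F} in
lemma mem_polysLT {d : ℕ} {p : F[X]} : p ∈ polysLT F d ↔ p.degree < d := by
  simp [polysLT]

lemma card_polysLT (d : ℕ) : #(polysLT F d) = Fintype.card F ^ d := by
  have h : (polysLT F d : Set F[X]) = degreeLT F d := by
    ext p
    simp [mem_polysLT, mem_degreeLT]
  rw [← Set.ncard_coe_finset, h, ← Nat.card_coe_set_eq]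
  refine (Nat.card_congr (degreeLTEquiv F d).toEquiv).trans ?_
  simp

/-- The monic polynomials of degree `i`, as a finset. -/
noncomputable def monics (i : ℕ) : Finset F[X] := by
  classical exact (polysLT F (i + 1)).filter fun n => n.Monic ∧ n.natDegree = i

variable {F} in
lemma mem_monics {i : ℕ} {n : F[X]} : n ∈ monics F i ↔ n.Monic ∧ n.natDegree = i := by
  simp only [monics, mem_filter, mem_polysLT, and_iff_right_iff_imp]
  rintro ⟨-, rfl⟩
  exact degree_le_natDegree.trans_lt (by exact_mod_cast Nat.lt_succ_self _)

lemma powerSum_eq_sum (i m : ℕ) : powerSum F i m = ∑ n ∈ monics F i, n ^ m := by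
  rw [powerSum, ← finsum_mem_coe_finset]
  congr! 3
  simp [mem_monics]

lemma zetaLtOne_eq_sum (d m : ℕ) : zetaLtOne F d m = ∑ i ∈ range d, powerSum F i m := by
  rw [zetaLtOne, ← finsum_mem_coe_finset]
  simp

/-- Nonzero polynomials of degree less than `d` are uniquely a unit times a monic one. -/
lemma sum_polysLT_pow [DecidableEq F] (d : ℕ) {b : ℕ} (hb : b ≠ 0) :
    ∑ s ∈ polysLT F d, s ^ b = C (∑ u : Fˣ, (u : F) ^ b) * zetaLtOne F d b := by
  classical
  have hmon : zetaLtOne F d b = ∑ n ∈ polysLT F d with n.Monic, n ^ b := by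
    rw [zetaLtOne_eq_sum, ← sum_fiberwise_of_maps_to (t := range d) (g := natDegree)]
    · refine sum_congr rfl fun i hi => ?_
      rw [powerSum_eq_sum]
      refine sum_congr (Finset.ext fun n => ?_) fun _ _ => rfl
      simp only [mem_monics, mem_filter, mem_polysLT]
      constructor
      · rintro ⟨h, rfl⟩
        refine ⟨⟨?_, h⟩, rfl⟩
        rw [degree_eq_natDegree h.ne_zero]
        exact_mod_cast mem_range.1 hi
      · rintro ⟨⟨-, h⟩, h'⟩
        exact ⟨h, h'⟩
    · intro n hn
      simp only [mem_filter, mem_polysLT] at hn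
      rw [degree_eq_natDegree hn.2.ne_zero] at hn
      exact mem_range.2 (by exact_mod_cast hn.1)
  have hne : ∑ s ∈ polysLT F d, s ^ b = ∑ s ∈ polysLT F d with s ≠ 0, s ^ b := by
    rw [sum_filter]
    refine sum_congr rfl fun s _ => ?_
    split_ifs with h
    · rfl
    · simp [not_not.1 h, hb]
  rw [hmon, hne, map_sum, sum_mul_sum, ← sum_product']
  symm
  refine sum_bij' (fun x _ => C (x.1 : F) * x.2)
    (fun s hs => (Units.mk0 s.leadingCoeff (leadingCoeff_ne_zero.2 (mem_filter.1 hs).2),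
      C s.leadingCoeff⁻¹ * s)) ?_ ?_ ?_ ?_ ?_
  · rintro ⟨u, n⟩ h
    simp only [mem_product, mem_univ, true_and, mem_filter, mem_polysLT] at h ⊢
    refine ⟨by rw [degree_C_mul u.ne_zero]; exact h.1, ?_⟩
    exact mul_ne_zero (C_ne_zero.2 u.ne_zero) h.2.ne_zero
  · intro s hs
    simp only [mem_product, mem_univ, true_and, mem_filter, mem_polysLT] at hs ⊢
    have hs' := leadingCoeff_ne_zero.2 hs.2
    refine ⟨by rw [degree_C_mul (inv_ne_zero hs')]; exact hs.1, ?_⟩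
    simp [Monic, hs']
  · rintro ⟨u, n⟩ h
    simp only [mem_product, mem_univ, true_and, mem_filter, mem_polysLT] at h
    have hl : (C (u : F) * n).leadingCoeff = u := by rw [leadingCoeff_mul, leadingCoeff_C, h.2.leadingCoeff, mul_one]
    ext1
    · ext
      exact hl
    · simp only [hl, ← mul_assoc, ← C_mul]
      simp
  · intro s hs
    have hs' := leadingCoeff_ne_zero.2 (mem_filter.1 hs).2
    simp [← mul_assoc, ← C_mul, hs']
  · rintro ⟨u, n⟩ h
    simp [mul_pow]

lemma sum_polysLT_pow_eq_ite {d : ℕ} (hd : 0 < d) (b : ℕ) :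
    ∑ s ∈ polysLT F d, s ^ b =
      if 0 < b ∧ Fintype.card F - 1 ∣ b then -zetaLtOne F d b else 0 := by
  classical
  rcases Nat.eq_zero_or_pos b with rfl | hb
  · simp [card_polysLT, hd.ne', ← C_eq_natCast]
  · rw [sum_polysLT_pow F d hb.ne', FiniteField.sum_pow_units]
    split_ifs <;> simp_all

/-- Euclidean division by `v` of monic polynomials. -/
lemma powerSum_add_eq_sum_sum {v : F[X]} (hv : v.Monic) (i m : ℕ) :
    powerSum F (v.natDegree + i) m =
      ∑ k ∈ monics F i, ∑ s ∈ polysLT F v.natDegree, (v * k + s) ^ m := by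
  have hlt : ∀ k ∈ monics F i, ∀ s ∈ polysLT F v.natDegree, s.degree < (v * k).degree := by
    intro k hk s hs
    rw [mem_monics] at hk
    rw [mem_polysLT] at hs
    rw [degree_mul, degree_eq_natDegree hv.ne_zero, degree_eq_natDegree hk.1.ne_zero]
    exact hs.trans_le (by exact_mod_cast Nat.le_add_right _ _)
  rw [powerSum_eq_sum, ← sum_product']
  symm
  refine sum_bij' (fun x _ => v * x.1 + x.2) (fun n _ => (n /ₘ v, n %ₘ v)) ?_ ?_ ?_ ?_ ?_
  · rintro ⟨k, s⟩ h
    obtain ⟨hk, hs⟩ := mem_product.1 h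
    have hl := hlt k hk s hs
    simp only [mem_monics] at hk ⊢
    refine ⟨(hv.mul hk.1).add_of_left hl, ?_⟩
    rw [natDegree_add_eq_left_of_degree_lt hl, hv.natDegree_mul hk.1, hk.2]
  · intro n hn
    rw [mem_monics] at hn
    simp only [mem_product, mem_monics, mem_polysLT]
    have hle : v.degree ≤ n.degree := by
      rw [degree_eq_natDegree hv.ne_zero, degree_eq_natDegree hn.1.ne_zero, hn.2]
      exact_mod_cast Nat.le_add_right _ _
    refine ⟨⟨?_, ?_⟩, ?_⟩
    · rw [Monic, leadingCoeff_divByMonic_of_monic hv hle]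
      exact hn.1
    · rw [natDegree_divByMonic n hv, hn.2, Nat.add_sub_cancel_left]
    · rw [← degree_eq_natDegree hv.ne_zero]
      exact degree_modByMonic_lt n hv
  · rintro ⟨k, s⟩ h
    obtain ⟨hk, hs⟩ := mem_product.1 h
    rw [mem_polysLT, ← degree_eq_natDegree hv.ne_zero] at hs
    obtain ⟨h1, h2⟩ := div_modByMonic_unique (f := v * k + s) k s hv ⟨add_comm _ _, hs⟩
    simp [h1, h2]
  · intro n hn
    rw [add_comm]
    exact modByMonic_add_div n v
  · intro x _
    rfl

/-- The exponents `a < m` with `q - 1 ∣ m - a`. -/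
noncomputable def admissible (m : ℕ) : Finset ℕ := {a ∈ range m | Fintype.card F - 1 ∣ m - a}

/-- Recursion for power sums. -/
lemma powerSum_add {v : F[X]} (hv : v.Monic) (hd : 0 < v.natDegree) (i m : ℕ) :
    powerSum F (v.natDegree + i) m = ∑ a ∈ admissible F m,
      (-(v ^ a * (zetaLtOne F v.natDegree (m - a) * (Nat.choose m a : F[X])))) *
        powerSum F i a := by
  have hpow : ∀ k : F[X], ∑ s ∈ polysLT F v.natDegree, (v * k + s) ^ m =
      ∑ a ∈ admissible F m,
        (-(v ^ a * (zetaLtOne F v.natDegree (m - a) * (Nat.choose m a : F[X])))) * k ^ a := by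
    intro k
    simp only [add_pow]
    rw [sum_comm, admissible, sum_filter, sum_range_succ]
    simp only [mul_right_comm _ _ (Nat.choose _ _ : F[X]), ← mul_sum,
      sum_polysLT_pow_eq_ite F hd]
    simp only [Nat.sub_self, lt_irrefl, false_and, if_false, mul_zero, add_zero]
    refine sum_congr rfl fun a ha => ?_
    simp only [Nat.sub_pos_of_lt (mem_range.1 ha), true_and]
    split_ifs
    · ring
    · simp
  simp only [powerSum_add_eq_sum_sum F hv, hpow, powerSum_eq_sum F i, mul_sum]
  rw [sum_comm]

lemma powerSum_eq_zero {i m : ℕ} (h : m < i) : powerSum F i m = 0 := by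
  induction m using Nat.strong_induction_on generalizing i with
  | _ m ih =>
    obtain ⟨k, rfl⟩ : ∃ k, i = (X : F[X]).natDegree + k := ⟨i - 1, by rw [natDegree_X]; omega⟩
    rw [powerSum_add F monic_X (by simp)]
    refine sum_eq_zero fun a ha => ?_
    have ham : a < m := mem_range.1 (mem_filter.1 ha).1
    rw [natDegree_X] at h
    rw [ih a ham (by omega), mul_zero]

lemma zetaLt_eq_nestedSum (d r : ℕ) (m : ℕ → ℕ) :
    zetaLt F d r m = nestedSum r (fun j i => powerSum F i (m j)) d := by
  rw [zetaLt, nestedSum, ← finsum_mem_coe_finset]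
  congr! 3
  simp [and_comm]

lemma zetaInf_eq_nestedSum (r N : ℕ) (m : ℕ → ℕ) (hN : ∀ j < r, m j < N) :
    zetaInf F r m = nestedSum r (fun j i => powerSum F i (m j)) N := by
  rw [zetaInf, nestedSum, ← finsum_mem_coe_finset]
  refine finsum_mem_inter_support_eq' _ _ _ fun i hi => ?_
  simp only [Set.mem_ofPred_eq, coe_filter, Fintype.mem_piFinset, mem_range, iff_and_self]
  intro _ j
  by_contra! hj
  refine hi (prod_eq_zero (mem_univ j) (powerSum_eq_zero F ?_))
  exact (hN j j.2).trans_le hj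

end PowerSum

/-- Tuples in a product of finsets, extended by zero to functions on `ℕ`. -/
lemma finsum_mem_eq_sum_piFinset {R : Type*} [AddCommMonoid R] (l : ℕ) (A : ℕ → Finset ℕ)
    (G : (ℕ → ℕ) → R) :
    ∑ᶠ a ∈ {a : ℕ → ℕ | (∀ j < l, a j ∈ A j) ∧ ∀ j, l ≤ j → a j = 0}, G a =
      ∑ a ∈ Fintype.piFinset (fun j : Fin l => A j),
        G fun j => if h : j < l then a ⟨j, h⟩ else 0 := by
  rw [← finsum_mem_coe_finset]
  refine finsum_mem_eq_of_bijOn (fun a (j : Fin l) => a j) ⟨?_, ?_, ?_⟩ ?_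
  · rintro a ⟨h, -⟩
    simpa using fun j : Fin l => h j j.2
  · rintro a ⟨-, ha⟩ b ⟨-, hb⟩ hab
    funext j
    rcases lt_or_ge j l with hj | hj
    · exact congrFun hab ⟨j, hj⟩
    · rw [ha j hj, hb j hj]
  · intro a ha
    simp only [mem_coe, Fintype.mem_piFinset] at ha
    refine ⟨fun j => if h : j < l then a ⟨j, h⟩ else 0, ⟨fun j hj => ?_, fun j hj => ?_⟩, ?_⟩
    · simpa [hj] using ha ⟨j, hj⟩
    · simp [hj.not_gt]
    · funext j
      simp
  · rintro a ⟨-, ha⟩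
    congr 1
    funext j
    split_ifs with h
    · rfl
    · exact ha j (not_lt.1 h)

/-- Recursive formula for ∞-adic multiple zeta values at negative integers.
The inner sum runs over tuples `(a_1, …, a_l)` (encoded as functions `a : ℕ → ℕ`
vanishing from index `l` on) with `0 ≤ a_j < m_j` and `(q-1) ∣ (m_j - a_j)`. -/
theorem zetaInf_recursive (F : Type*) [Field F] [Fintype F] (v : Polynomial F)
    (hv : v.Monic) (hvirr : Irreducible v) (hd : 0 < v.natDegree) (r : ℕ) (hr : 1 ≤ r)
    (m : ℕ → ℕ) :
    zetaInf F r m =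
      ∑ l ∈ Finset.range (r + 1),
        (-1 : Polynomial F) ^ l * zetaLt F v.natDegree (r - l) (fun j => m (l + j)) *
          ∑ᶠ a ∈ {a : ℕ → ℕ |
              (∀ j < l, a j < m j ∧ (Fintype.card F - 1) ∣ (m j - a j)) ∧
                ∀ j, l ≤ j → a j = 0},
            v ^ (∑ j ∈ Finset.range l, a j) *
              (∏ j ∈ Finset.range l,
                zetaLtOne F v.natDegree (m j - a j) * (Nat.choose (m j) (a j) : Polynomial F)) *
              zetaInf F l a := by
  have hN : ∃ N, ∀ j < r, m j < N :=
    ⟨∑ j ∈ range r, m j + 1, fun j hj =>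
      Nat.lt_succ_of_le (single_le_sum (fun _ _ => Nat.zero_le _) (mem_range.2 hj))⟩
  obtain ⟨N, hN⟩ := hN
  rw [zetaInf_eq_nestedSum F r (v.natDegree + N) m fun j hj => (hN j hj).trans_le (by omega),
    nestedSum_add]
  refine sum_congr rfl fun l hl => ?_
  have hset : {a : ℕ → ℕ | (∀ j < l, a j < m j ∧ (Fintype.card F - 1) ∣ (m j - a j)) ∧
      ∀ j, l ≤ j → a j = 0} =
      {a : ℕ → ℕ | (∀ j < l, a j ∈ admissible F (m j)) ∧ ∀ j, l ≤ j → a j = 0} := by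
    simp [admissible]
  rw [zetaLt_eq_nestedSum, hset, finsum_mem_eq_sum_piFinset l (fun j => admissible F (m j)),
    mul_right_comm, mul_comm (nestedSum l _ N)]
  rw [mul_comm (nestedSum (r - l) _ _)]
  congr 1
  simp only [powerSum_add F hv hd]
  rw [nestedSum_sum l (fun j => admissible F (m j)) (fun j a =>
    -(v ^ a * (zetaLtOne F v.natDegree (m j - a) * (Nat.choose (m j) a : F[X]))))
    (fun a i => powerSum F i a), mul_sum]
  refine sum_congr rfl fun a ha => ?_
  have ha' : ∀ j : Fin l, a j < m j := fun j =>
    mem_range.1 (mem_filter.1 (Fintype.mem_piFinset.1 ha j)).1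
  rw [zetaInf_eq_nestedSum F l N]
  · simp only [nestedSum, ← prod_pow_eq_pow_sum, prod_range, Fin.is_lt, dite_true, Fin.eta,
      prod_neg, prod_mul_distrib, card_univ, Fintype.card_fin]
    ring
  · intro j hj
    simp only [hj, dite_true]
    exact (ha' ⟨j, hj⟩).trans (hN j (hj.trans_le (Nat.lt_succ_iff.1 (mem_range.1 hl))))
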